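/- Let n ≥ 2 and let x_1 < x_2 < ⋯ < x_n and y_1 < y_2 < ⋯ < y_n be real numbers with Σ_i x_i = Σ_i y_i = 0. Set μ = n^{−1} Σ_{i=1}^n δ_{x_i} and ν = n^{−1} Σ_{i=1}^n δ_{y_i}. Assume that D(μ,ν)² = (1/n²) · min_{σ ∈ S_n} Σ_{i=1}^n Σ_{j=1}^n ( |x_i − x_j|² − |y_{σ(i)} − y_{σ(j)}|² )². Let W_− = min_{π∈Π(μ,ν)} ∫ xy dπ(x,y) and W_+ = max_{π∈Π(μ,ν)} ∫ xy dπ(x,y). Let S* ⊂ S_n be the set of permutations minimizing σ ↦ Σ_{i,j} (|x_i − x_j|² − |y_{σ(i)} − y_{σ(j)}|²)², and let A* ⊂ [W_−/2, W_+/2] be the set of minimizers of a ↦ 32a² + min_{π∈Π(μ,ν)} ∫ (−4x²y² − 32axy) dπ(x,y) over [W_−/2, W_+/2]. Then A* ⊂ {W_−/2, W_+/2} if and only if S* ⊂ {id, anti-id}, where id(i) = i and anti-id(i) = n − i + 1. -/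

import Mathlib

/-! A coupling `π` of the two uniform measures lives on the grid of points `(x i, y j)`, and `n` times
its matrix of masses is doubly stochastic. By Birkhoff's theorem the integral of any cost against
`π` is therefore a convex combination of its averages over graphs of permutations, so infima and
suprema of linear functionals over couplings are attained at permutations
(`exists_perm_of_coupling`, `exists_isLeast_perm`).

Write `m σ` and `q σ` for the averages of `x i * y (σ i)` and of `x i ^ 2 * y (σ i) ^ 2`. Since both
families of points are centered, `F σ = C - n ^ 2 * (4 * q σ + 8 * m σ ^ 2)` with `C` independent of
`σ` (`cost_expand`). On the other hand,
`g a = min_σ (32 * a ^ 2 - 4 * q σ - 32 * a * m σ)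
     = min_σ (32 * (a - m σ / 2) ^ 2 - 4 * q σ - 8 * m σ ^ 2)`,
so the minimizers of `g` are exactly the numbers `m σ / 2` with `σ` minimizing `F`. Finally
`W₊ = m id` and `W₋ = m rev` by the rearrangement inequality, whose equality case for strictly
increasing sequences says that `id` and `rev` are the only permutations attaining these values. -/

open MeasureTheory
open scoped ENNReal NNReal BigOperators

noncomputable section

/-- The set of couplings of two measures. -/
def Couplings {E F : Type*} [MeasurableSpace E] [MeasurableSpace F]
    (μ : Measure E) (ν : Measure F) : Set (Measure (E × F)) :=
  {π | IsProbabilityMeasure π ∧ π.map Prod.fst = μ ∧ π.map Prod.snd = ν}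

/-- Quadratic (2,2) GW distortion cost of a coupling. -/
def GWCost {E F : Type*} [NormedAddCommGroup E] [NormedAddCommGroup F]
    [MeasurableSpace E] [MeasurableSpace F] (π : Measure (E × F)) : ℝ :=
  ∫ p, (‖p.1.1 - p.2.1‖ ^ 2 - ‖p.1.2 - p.2.2‖ ^ 2) ^ 2 ∂(π.prod π)

open Classical in
/-- KL divergence, with value `⊤` when it is not finite. -/
def KLD {Z : Type*} [MeasurableSpace Z] (π ρ : Measure Z) : ℝ≥0∞ :=
  if π ≪ ρ ∧ Integrable (MeasureTheory.llr π ρ) π then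
    ENNReal.ofReal (∫ z, MeasureTheory.llr π ρ z ∂π) else ⊤

/-- ε-weighted entropic penalty. -/
def entTerm {Z : Type*} [MeasurableSpace Z] (ε : ℝ) (π ρ : Measure Z) : ℝ≥0∞ :=
  ENNReal.ofReal ε * KLD π ρ

/-- Entropic (2,2) Gromov–Wasserstein cost `S_ε`. -/
def SEps {E F : Type*} [NormedAddCommGroup E] [NormedAddCommGroup F]
    [MeasurableSpace E] [MeasurableSpace F] (ε : ℝ) (μ : Measure E) (ν : Measure F) : ℝ :=
  sInf {v | ∃ π ∈ Couplings μ ν,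
    entTerm ε π (μ.prod ν) ≠ ⊤ ∧ v = GWCost π + (entTerm ε π (μ.prod ν)).toReal}

/-- Squared (2,2) Gromov–Wasserstein distance `D(μ,ν)²`. -/
def GWsq {E F : Type*} [NormedAddCommGroup E] [NormedAddCommGroup F]
    [MeasurableSpace E] [MeasurableSpace F] (μ : Measure E) (ν : Measure F) : ℝ :=
  sInf {v | ∃ π ∈ Couplings μ ν, v = GWCost π}


/-- The uniform discrete measure on the points `x 0, …, x (n-1)` of `ℝ`. -/
def unifPts (n : ℕ) (x : Fin n → ℝ) : Measure ℝ :=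
  (n : ℝ≥0∞)⁻¹ • ∑ i : Fin n, Measure.dirac (x i)

/-- Integrals against a uniform measure on a finite family of points are averages. -/
lemma integral_unif {E ι : Type*} [MeasurableSpace E] [MeasurableSingletonClass E]
    (n : ℕ) (s : Finset ι) (p : ι → E) (c : E → ℝ) :
    ∫ z, c z ∂((n : ℝ≥0∞)⁻¹ • ∑ i ∈ s, Measure.dirac (p i)) = (1 / (n : ℝ)) * ∑ i ∈ s, c (p i) := by
  rw [integral_smul_measure, integral_finsetSum_measure]
  · simp [integral_dirac]
  · intro i _
    exact integrable_dirac (by simp)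

/-- Every permutation induces a coupling. -/
lemma perm_coupling (n : ℕ) (hn : 2 ≤ n) (x y : Fin n → ℝ) (σ : Equiv.Perm (Fin n)) :
    ∃ π ∈ Couplings (unifPts n x) (unifPts n y), ∀ c : ℝ × ℝ → ℝ,
      ∫ z, c z ∂π = (1 / (n : ℝ)) * ∑ i, c (x i, y (σ i)) := by
  refine ⟨(n : ℝ≥0∞)⁻¹ • ∑ i : Fin n, Measure.dirac (x i, y (σ i)), ⟨⟨?_⟩, ?_, ?_⟩,
    fun c => integral_unif n _ _ c⟩
  · have h0 : (n : ℝ≥0∞) ≠ 0 := by simp; omega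
    simp [ENNReal.inv_mul_cancel h0 (ENNReal.natCast_ne_top n)]
  · rw [Measure.map_smul, Measure.map_finset_sum measurable_fst.aemeasurable]
    simp [unifPts, Measure.map_dirac' measurable_fst]
  · rw [Measure.map_smul, Measure.map_finset_sum measurable_snd.aemeasurable]
    simp only [unifPts, Measure.map_dirac' measurable_snd]
    rw [Equiv.sum_comp σ (fun i => Measure.dirac (y i))]

lemma ae_mem_range (n : ℕ) (x : Fin n → ℝ) : ∀ᵐ t ∂(unifPts n x), t ∈ Set.range x := by
  rw [ae_iff]
  simp [unifPts]

open Classical in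
/-- A coupling is carried by the grid `(x i, y j)`, so integrals against it are finite sums. -/
lemma coupling_integral (n : ℕ) (x y : Fin n → ℝ)
    (hx : Function.Injective x) (hy : Function.Injective y)
    (π : Measure (ℝ × ℝ)) (hπ : π ∈ Couplings (unifPts n x) (unifPts n y)) (c : ℝ × ℝ → ℝ) :
    ∫ z, c z ∂π = ∑ i, ∑ j, π.real {(x i, y j)} * c (x i, y j) := by
  obtain ⟨hp, h1, h2⟩ := hπ
  have a1 : ∀ᵐ z ∂π, z.1 ∈ Set.range x :=
    ae_of_ae_map measurable_fst.aemeasurable (h1 ▸ ae_mem_range n x)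
  have a2 : ∀ᵐ z ∂π, z.2 ∈ Set.range y :=
    ae_of_ae_map measurable_snd.aemeasurable (h2 ▸ ae_mem_range n y)
  set e : Fin n × Fin n → ℝ × ℝ := fun p => (x p.1, y p.2) with he
  have hinj : Function.Injective e := by
    rintro ⟨i, j⟩ ⟨k, l⟩ h
    simp only [he, Prod.mk.injEq] at h
    rw [hx h.1, hy h.2]
  have hr : π.restrict ((Finset.univ.image e : Finset (ℝ × ℝ)) : Set (ℝ × ℝ)) = π := by
    rw [Measure.restrict_eq_self_of_ae_mem]
    filter_upwards [a1, a2] with z ⟨i, hi⟩ ⟨j, hj⟩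
    simp only [Finset.coe_image, Finset.coe_univ, Set.image_univ]
    exact ⟨(i, j), Prod.ext hi hj⟩
  have hc : ∫ z, c z ∂π
      = ∫ z in ((Finset.univ.image e : Finset (ℝ × ℝ)) : Set (ℝ × ℝ)), c z ∂π := by rw [hr]
  rw [hc, setIntegral_finset _ IntegrableOn.finset, Finset.sum_image (fun a _ b _ h => hinj h), Fintype.sum_prod_type]
  simp [he]

open Classical in
/-- Birkhoff's theorem for couplings: integrals against a coupling are convex combinations of the
averages along permutations. -/
lemma coupling_weights (n : ℕ) (hn : 2 ≤ n) (x y : Fin n → ℝ)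
    (hx : Function.Injective x) (hy : Function.Injective y)
    (π : Measure (ℝ × ℝ)) (hπ : π ∈ Couplings (unifPts n x) (unifPts n y)) :
    ∃ w : Equiv.Perm (Fin n) → ℝ, (∀ σ, 0 ≤ w σ) ∧ ∑ σ, w σ = 1 ∧ ∀ c : ℝ × ℝ → ℝ,
      ∫ z, c z ∂π = ∑ σ, w σ * ((1 / (n : ℝ)) * ∑ i, c (x i, y (σ i))) := by
  have hn0 : (n : ℝ) ≠ 0 := by positivity
  set M : Matrix (Fin n) (Fin n) ℝ := Matrix.of fun i j => n * π.real {(x i, y j)} with hM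
  have hmem : M ∈ doublyStochastic ℝ (Fin n) := by
    rw [mem_doublyStochastic_iff_sum]
    refine ⟨fun i j => by simp only [hM, Matrix.of_apply]; positivity, fun i => ?_, fun j => ?_⟩
    -- the row and column sums come from integrating indicators of `{x i} × ℝ` and `ℝ × {y j}`
    · have h := coupling_integral n x y hx hy π hπ (fun z => if z.1 = x i then 1 else 0)
      have h' : ∫ z : ℝ × ℝ, (if z.1 = x i then (1 : ℝ) else 0) ∂π = 1 / n := by
        rw [← integral_map (φ := Prod.fst) (f := fun t : ℝ => if t = x i then (1 : ℝ) else 0)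
          measurable_fst.aemeasurable (Measurable.ite (measurableSet_singleton (x i))
            measurable_const measurable_const).aestronglyMeasurable, hπ.2.1, unifPts, integral_unif]
        simp [hx.eq_iff]
      rw [h'] at h
      simp only [hx.eq_iff, mul_ite, mul_one, mul_zero] at h
      rw [Finset.sum_comm] at h
      simp only [Finset.sum_ite_eq', Finset.mem_univ, if_true] at h
      simp only [hM, Matrix.of_apply, ← Finset.mul_sum, ← h]
      field_simp
    · have h := coupling_integral n x y hx hy π hπ (fun z => if z.2 = y j then 1 else 0)
      have h' : ∫ z : ℝ × ℝ, (if z.2 = y j then (1 : ℝ) else 0) ∂π = 1 / n := by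
        rw [← integral_map (φ := Prod.snd) (f := fun t : ℝ => if t = y j then (1 : ℝ) else 0)
          measurable_snd.aemeasurable (Measurable.ite (measurableSet_singleton (y j))
            measurable_const measurable_const).aestronglyMeasurable, hπ.2.2, unifPts, integral_unif]
        simp [hy.eq_iff]
      rw [h'] at h
      simp only [hy.eq_iff, mul_ite, mul_one, mul_zero, Finset.sum_ite_eq', Finset.mem_univ,
        if_true] at h
      simp only [hM, Matrix.of_apply, ← Finset.mul_sum, ← h]
      field_simp
  obtain ⟨w, w0, w1, hw⟩ := exists_eq_sum_perm_of_mem_doublyStochastic hmem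
  refine ⟨w, w0, w1, fun c => ?_⟩
  rw [coupling_integral n x y hx hy π hπ c]
  have hP : ∀ i j, π.real {(x i, y j)} = (1 / (n : ℝ)) * ∑ σ, w σ * (if σ i = j then 1 else 0) := by
    intro i j
    have h : (∑ σ, w σ • σ.permMatrix ℝ) i j = n * π.real {(x i, y j)} := by rw [hw]; simp [hM]
    simp only [Matrix.sum_apply, Matrix.smul_apply, smul_eq_mul, Equiv.Perm.permMatrix,
      PEquiv.toMatrix_apply, Equiv.toPEquiv_apply, Option.mem_def, Option.some.injEq] at h
    rw [h]
    field_simp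
  calc ∑ i, ∑ j, π.real {(x i, y j)} * c (x i, y j)
      = ∑ i, ∑ j, ∑ σ : Equiv.Perm (Fin n),
          if σ i = j then w σ * (1 / (n : ℝ)) * c (x i, y j) else 0 := by
        refine Finset.sum_congr rfl fun i _ => Finset.sum_congr rfl fun j _ => ?_
        rw [hP, Finset.mul_sum, Finset.sum_mul]
        refine Finset.sum_congr rfl fun σ _ => ?_
        split_ifs <;> ring
    _ = ∑ i, ∑ σ : Equiv.Perm (Fin n), w σ * (1 / (n : ℝ)) * c (x i, y (σ i)) := by
        refine Finset.sum_congr rfl fun i _ => ?_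
        rw [Finset.sum_comm]
        simp
    _ = _ := by
        rw [Finset.sum_comm]
        refine Finset.sum_congr rfl fun σ _ => ?_
        rw [Finset.mul_sum, Finset.mul_sum]
        exact Finset.sum_congr rfl fun i _ => by ring

/-- For every cost, some permutation does at least as well as a given coupling. -/
lemma exists_perm_of_coupling (n : ℕ) (hn : 2 ≤ n) (x y : Fin n → ℝ)
    (hx : Function.Injective x) (hy : Function.Injective y)
    (π : Measure (ℝ × ℝ)) (hπ : π ∈ Couplings (unifPts n x) (unifPts n y)) (c : ℝ × ℝ → ℝ) :
    ∃ σ : Equiv.Perm (Fin n), (1 / (n : ℝ)) * ∑ i, c (x i, y (σ i)) ≤ ∫ z, c z ∂π := by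
  obtain ⟨w, w0, w1, hw⟩ := coupling_weights n hn x y hx hy π hπ
  by_contra! h
  obtain ⟨σ, -, hσ⟩ := Finset.exists_min_image Finset.univ
    (fun σ : Equiv.Perm (Fin n) => (1 / (n : ℝ)) * ∑ i, c (x i, y (σ i))) ⟨1, Finset.mem_univ 1⟩
  have h1 := h σ
  rw [hw c] at h1
  have : ∑ τ, w τ * ((1 / (n : ℝ)) * ∑ i, c (x i, y (σ i)))
      ≤ ∑ τ, w τ * ((1 / (n : ℝ)) * ∑ i, c (x i, y (τ i))) :=
    Finset.sum_le_sum fun τ hτ => mul_le_mul_of_nonneg_left (hσ τ hτ) (w0 τ)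
  rw [← Finset.sum_mul, w1, one_mul] at this
  exact absurd h1 (not_lt.2 this)

/-- The infimum of a linear cost over couplings is attained at a permutation. -/
lemma exists_isLeast_perm (n : ℕ) (hn : 2 ≤ n) (x y : Fin n → ℝ)
    (hx : Function.Injective x) (hy : Function.Injective y) (c : ℝ × ℝ → ℝ) :
    ∃ σ : Equiv.Perm (Fin n), sInf {r | ∃ π ∈ Couplings (unifPts n x) (unifPts n y),
        r = ∫ z, c z ∂π} = (1 / (n : ℝ)) * ∑ i, c (x i, y (σ i)) ∧
      ∀ τ : Equiv.Perm (Fin n), (1 / (n : ℝ)) * ∑ i, c (x i, y (σ i))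
        ≤ (1 / (n : ℝ)) * ∑ i, c (x i, y (τ i)) := by
  obtain ⟨σ, -, hσ⟩ := Finset.exists_min_image Finset.univ
    (fun σ : Equiv.Perm (Fin n) => (1 / (n : ℝ)) * ∑ i, c (x i, y (σ i))) ⟨1, Finset.mem_univ 1⟩
  refine ⟨σ, IsLeast.csInf_eq ⟨?_, ?_⟩, fun τ => hσ τ (Finset.mem_univ τ)⟩
  · obtain ⟨π, hπ, h⟩ := perm_coupling n hn x y σ
    exact ⟨π, hπ, (h c).symm⟩
  · rintro r ⟨π, hπ, rfl⟩
    obtain ⟨τ, hτ⟩ := exists_perm_of_coupling n hn x y hx hy π hπ c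
    exact (hσ τ (Finset.mem_univ τ)).trans hτ

/-- For centered points the quadratic GW cost depends on `σ` only through the sums of
`x i * y (σ i)` and of `x i ^ 2 * y (σ i) ^ 2`. -/
lemma cost_expand (n : ℕ) (x y : Fin n → ℝ) (hcx : ∑ i, x i = 0) (hcy : ∑ i, y i = 0) :
    ∃ C : ℝ, ∀ σ : Equiv.Perm (Fin n),
      ∑ i : Fin n, ∑ j : Fin n, ((x i - x j) ^ 2 - (y (σ i) - y (σ j)) ^ 2) ^ 2
        = C - 4 * n * ∑ i, x i ^ 2 * y (σ i) ^ 2 - 8 * (∑ i, x i * y (σ i)) ^ 2 := by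
  refine ⟨(∑ i, ∑ j, (x i - x j) ^ 4) + (∑ i, ∑ j, (y i - y j) ^ 4)
    - 4 * (∑ i, x i ^ 2) * ∑ i, y i ^ 2, fun σ => ?_⟩
  have e4 : ∑ i, ∑ j, (y i - y j) ^ 4 = ∑ i, ∑ j, (y (σ i) - y (σ j)) ^ 4 := by
    rw [← Equiv.sum_comp σ]
    exact Finset.sum_congr rfl fun i _ => (Equiv.sum_comp σ fun j => (y (σ i) - y j) ^ 4).symm
  have e2 : ∑ i, y i ^ 2 = ∑ i, y (σ i) ^ 2 := (Equiv.sum_comp σ fun i => y i ^ 2).symm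
  have e1 : ∑ i, y (σ i) = 0 := (Equiv.sum_comp σ y).trans hcy
  rw [e4, e2]
  generalize hz : (fun i => y (σ i)) = z
  have hz' : ∀ i, y (σ i) = z i := fun i => congrFun hz i
  simp only [hz'] at e1 ⊢
  obtain ⟨A, hA⟩ : ∃ A : Fin n → ℝ, ∀ i, A i = x i ^ 2 * z i ^ 2 := ⟨_, fun _ => rfl⟩
  simp only [← hA]
  have expand : ∀ i j, ((x i - x j) ^ 2 - (z i - z j) ^ 2) ^ 2
      = (x i - x j) ^ 4 + (z i - z j) ^ 4
        - 2 * A i - 2 * A j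
        - 2 * (x i ^ 2 * z j ^ 2) - 2 * (z i ^ 2 * x j ^ 2)
        + 4 * ((x i ^ 2 * z i) * z j) + 4 * (z i * (x j ^ 2 * z j))
        + 4 * ((x i * z i ^ 2) * x j) + 4 * (x i * (x j * z j ^ 2))
        - 8 * ((x i * z i) * (x j * z j)) := by
    intro i j; rw [hA, hA]; ring
  simp only [expand, Finset.sum_add_distrib, Finset.sum_sub_distrib, ← Finset.mul_sum,
    ← Finset.sum_mul, e1, hcx, Finset.sum_const, Finset.card_univ, Fintype.card_fin, nsmul_eq_mul]
  ring

lemma perm_eq_refl_of_strictMono (n : ℕ) (σ : Equiv.Perm (Fin n)) (h : StrictMono σ) :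
    σ = Equiv.refl _ := by
  have := (StrictMono.range_inj (f := (σ : Fin n → Fin n)) (g := id) h strictMono_id).1
    (by simp [σ.surjective.range_eq])
  exact Equiv.ext fun i => congrFun this i

/-- The identity is the strict maximizer of `σ ↦ ∑ x i * y (σ i)`. -/
lemma sum_id (n : ℕ) (x y : Fin n → ℝ) (hx : StrictMono x) (hy : StrictMono y)
    (σ : Equiv.Perm (Fin n)) : ∑ i, x i * y (σ i) ≤ ∑ i, x i * y i ∧
      (∑ i, x i * y (σ i) = ∑ i, x i * y i → σ = Equiv.refl _) := by
  have hm : Monovary x y := hx.monotone.monovary hy.monotone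
  refine ⟨hm.sum_mul_comp_perm_le_sum_mul, fun h => ?_⟩
  have h2 := hm.sum_mul_comp_perm_eq_sum_mul_iff.1 h
  refine perm_eq_refl_of_strictMono n σ fun i j hij => ?_
  by_contra! hc
  have hlt : σ j < σ i := lt_of_le_of_ne hc fun he => hij.ne' (σ.injective he)
  exact absurd (h2 (hy hlt)) (not_le.2 (hx hij))

/-- The order reversal is the strict minimizer of `σ ↦ ∑ x i * y (σ i)`. -/
lemma sum_rev (n : ℕ) (x y : Fin n → ℝ) (hx : StrictMono x) (hy : StrictMono y)
    (σ : Equiv.Perm (Fin n)) : ∑ i, x i * y (Fin.rev i) ≤ ∑ i, x i * y (σ i) ∧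
      (∑ i, x i * y (σ i) = ∑ i, x i * y (Fin.rev i) → σ = Fin.revPerm) := by
  -- apply the maximizing case to the increasing sequence `i ↦ -y (rev i)`
  have hy' : StrictMono fun i => -y (Fin.rev i) := fun i j hij =>
    neg_lt_neg (hy (Fin.rev_lt_rev.2 hij))
  have h := sum_id n x _ hx hy' (σ.trans Fin.revPerm)
  simp only [Equiv.trans_apply, Fin.revPerm_apply, Fin.rev_rev, mul_neg, Finset.sum_neg_distrib,
    neg_le_neg_iff, neg_inj] at h
  refine ⟨h.1, fun he => Equiv.ext fun i => ?_⟩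
  have := Equiv.congr_fun (h.2 he) i
  simp only [Equiv.trans_apply, Fin.revPerm_apply, Equiv.refl_apply] at this ⊢
  rw [← Fin.rev_rev (σ i), this]

/-- **Boundary values and optimal permutations for one-dimensional GW.**
For uniform measures on `n` distinct centered points, with
`W₋ = inf_π ∫ xy dπ`, `W₊ = sup_π ∫ xy dπ`, the minimizers `A*` of
`a ↦ 32a² + inf_π ∫ (−4x²y² − 32axy) dπ` over `[W₋/2, W₊/2]` satisfy
`A* ⊆ {W₋/2, W₊/2}` iff the optimal permutations for the GW problem satisfy
`S* ⊆ {id, anti-id}`. -/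
theorem gw_1d_boundary_iff_identity (n : ℕ) (hn : 2 ≤ n)
    (x y : Fin n → ℝ) (hx : StrictMono x) (hy : StrictMono y)
    (hcx : ∑ i, x i = 0) (hcy : ∑ i, y i = 0)
    (hGW : GWsq (unifPts n x) (unifPts n y)
      = (1 / (n : ℝ) ^ 2) * ⨅ σ : Equiv.Perm (Fin n),
          ∑ i : Fin n, ∑ j : Fin n,
            ((x i - x j) ^ 2 - (y (σ i) - y (σ j)) ^ 2) ^ 2) :
    (let μ : Measure ℝ := unifPts n x
     let ν : Measure ℝ := unifPts n y
     let Wm : ℝ := sInf {r | ∃ π ∈ Couplings μ ν, r = ∫ z : ℝ × ℝ, z.1 * z.2 ∂π}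
     let Wp : ℝ := sSup {r | ∃ π ∈ Couplings μ ν, r = ∫ z : ℝ × ℝ, z.1 * z.2 ∂π}
     let g : ℝ → ℝ := fun a => 32 * a ^ 2 +
        sInf {r | ∃ π ∈ Couplings μ ν,
          r = ∫ z : ℝ × ℝ, (-4 * (z.1 ^ 2 * z.2 ^ 2) - 32 * a * (z.1 * z.2)) ∂π}
     let F : Equiv.Perm (Fin n) → ℝ := fun σ =>
        ∑ i : Fin n, ∑ j : Fin n, ((x i - x j) ^ 2 - (y (σ i) - y (σ j)) ^ 2) ^ 2
     let Sstar : Set (Equiv.Perm (Fin n)) := {σ | ∀ τ, F σ ≤ F τ}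
     let Astar : Set ℝ :=
        {a | a ∈ Set.Icc (Wm / 2) (Wp / 2) ∧ ∀ a' ∈ Set.Icc (Wm / 2) (Wp / 2), g a ≤ g a'}
     (Astar ⊆ {Wm / 2, Wp / 2} ↔
        Sstar ⊆ {Equiv.refl (Fin n), (Fin.revPerm : Equiv.Perm (Fin n))})) := by
  intro μ ν Wm Wp g F Sstar Astar
  have hxi := hx.injective
  have hyi := hy.injective
  have hn0 : (0 : ℝ) < n := by positivity
  set m : Equiv.Perm (Fin n) → ℝ := fun σ => (1 / (n : ℝ)) * ∑ i, x i * y (σ i) with hm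
  set q : Equiv.Perm (Fin n) → ℝ := fun σ => (1 / (n : ℝ)) * ∑ i, x i ^ 2 * y (σ i) ^ 2 with hq
  have hid : ∀ σ, m σ ≤ m (Equiv.refl _) := fun σ =>
    mul_le_mul_of_nonneg_left (sum_id n x y hx hy σ).1 (by positivity)
  have hrev : ∀ σ, m Fin.revPerm ≤ m σ := fun σ =>
    mul_le_mul_of_nonneg_left (sum_rev n x y hx hy σ).1 (by positivity)
  have hid' : ∀ σ, m σ = m (Equiv.refl _) → σ = Equiv.refl _ := fun σ h =>
    (sum_id n x y hx hy σ).2 (mul_left_cancel₀ (by positivity) h)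
  have hrev' : ∀ σ, m σ = m Fin.revPerm → σ = Fin.revPerm := fun σ h =>
    (sum_rev n x y hx hy σ).2 (mul_left_cancel₀ (by positivity) h)
  have hWm : Wm = m Fin.revPerm := by
    obtain ⟨σ, h1, h2⟩ := exists_isLeast_perm n hn x y hxi hyi (fun z => z.1 * z.2)
    exact h1.trans (le_antisymm (h2 Fin.revPerm) (hrev σ))
  have hWp : Wp = m (Equiv.refl _) := by
    refine IsGreatest.csSup_eq ⟨?_, ?_⟩
    · obtain ⟨π, hπ, h⟩ := perm_coupling n hn x y (Equiv.refl _)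
      exact ⟨π, hπ, (h fun z => z.1 * z.2).symm⟩
    · rintro r ⟨π, hπ, rfl⟩
      obtain ⟨τ, hτ⟩ := exists_perm_of_coupling n hn x y hxi hyi π hπ (fun z => -(z.1 * z.2))
      rw [integral_neg] at hτ
      simp only [Finset.sum_neg_distrib, mul_neg, neg_le_neg_iff] at hτ
      exact hτ.trans (hid τ)
  have hgeq : ∀ a (σ : Equiv.Perm (Fin n)), (1 / (n : ℝ)) * ∑ i,
      (-4 * (x i ^ 2 * y (σ i) ^ 2) - 32 * a * (x i * y (σ i))) = -4 * q σ - 32 * a * m σ := by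
    intro a σ
    rw [Finset.sum_sub_distrib, ← Finset.mul_sum, ← Finset.mul_sum]
    simp only [hm, hq]
    ring
  have hg : ∀ a, ∃ σ, g a = 32 * (a - m σ / 2) ^ 2 - 4 * q σ - 8 * m σ ^ 2 ∧
      ∀ τ, g a ≤ 32 * (a - m τ / 2) ^ 2 - 4 * q τ - 8 * m τ ^ 2 := by
    intro a
    obtain ⟨σ, h1, h2⟩ := exists_isLeast_perm n hn x y hxi hyi
      (fun z => -4 * (z.1 ^ 2 * z.2 ^ 2) - 32 * a * (z.1 * z.2))
    simp only [hgeq] at h1 h2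
    have h3 : g a = 32 * a ^ 2 + (-4 * q σ - 32 * a * m σ) := by rw [← h1]
    refine ⟨σ, by rw [h3]; ring, fun τ => ?_⟩
    rw [h3]
    linarith [h2 τ]
  obtain ⟨C, hC⟩ := cost_expand n x y hcx hcy
  have hF : ∀ σ, F σ = C + n ^ 2 * (-4 * q σ - 8 * m σ ^ 2) := by
    intro σ
    change ∑ i : Fin n, ∑ j : Fin n, ((x i - x j) ^ 2 - (y (σ i) - y (σ j)) ^ 2) ^ 2 = _
    rw [hC σ]
    simp only [hm, hq]
    field_simp
    ring
  have hFle : ∀ σ τ, F σ ≤ F τ ↔ -4 * q σ - 8 * m σ ^ 2 ≤ -4 * q τ - 8 * m τ ^ 2 := by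
    intro σ τ
    rw [hF, hF, add_le_add_iff_left, mul_le_mul_iff_right₀ (by positivity)]
  have hI : ∀ σ, m σ / 2 ∈ Set.Icc (Wm / 2) (Wp / 2) := fun σ => by
    rw [hWm, hWp]
    exact ⟨by linarith [hrev σ], by linarith [hid σ]⟩
  constructor
  · intro hA σ hσ
    have hmem : m σ / 2 ∈ Astar := by
      refine ⟨hI σ, fun a' _ => ?_⟩
      obtain ⟨τ, hτ, -⟩ := hg a'
      obtain ⟨-, -, h2⟩ := hg (m σ / 2)
      have h3 := h2 σ
      have h4 := (hFle σ τ).1 (hσ τ)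
      rw [sub_self] at h3
      nlinarith [sq_nonneg (a' - m τ / 2)]
    rcases hA hmem with h | h
    · right
      exact hrev' σ (by rw [hWm] at h; linarith)
    · left
      rw [Set.mem_singleton_iff, hWp] at h
      exact hid' σ (by linarith)
  · intro hS a ha
    obtain ⟨σ, -, hσ⟩ := Finset.exists_min_image Finset.univ F ⟨1, Finset.mem_univ 1⟩
    obtain ⟨τ, hτ, -⟩ := hg a
    obtain ⟨-, -, h2⟩ := hg (m σ / 2)
    have h3 := h2 σ
    rw [sub_self] at h3
    have h5 := ha.2 _ (hI σ)
    have h4 := (hFle σ τ).1 (hσ τ (Finset.mem_univ τ))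
    -- hence `a = m τ / 2`, and `τ` is optimal
    have hsq : (a - m τ / 2) ^ 2 = 0 := by nlinarith [sq_nonneg (a - m τ / 2)]
    have hτS : τ ∈ Sstar := fun ρ =>
      ((hFle τ σ).2 (by nlinarith [sq_nonneg (a - m τ / 2)])).trans (hσ ρ (Finset.mem_univ ρ))
    have ha' : a = m τ / 2 := by
      have := pow_eq_zero_iff (two_ne_zero) |>.1 hsq
      linarith
    rcases hS hτS with h | h
    · right
      rw [Set.mem_singleton_iff, hWp, ha', h]
    · left
      rw [hWm, ha', Set.mem_singleton_iff.1 h]
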